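/- Let μ and μ' be stable matchings, and let μ₁ and μ₂ be matchings contained in V(Γ*(μ,μ')) that both contain all isolated vertices of Γ*(μ,μ'), such that on every nontrivial weakly connected component of Γ*(μ,μ') each of μ₁ and μ₂ agrees with μ or with μ', and such that μ₁ and μ₂ agree on all nontrivial components except exactly one component C, where μ₁ agrees with μ and μ₂ agrees with μ'. Then μ₁ and μ₂ are stable matchings and Γ*(μ₁,μ₂) has exactly one nontrivial weakly connected component. -/

import Mathlib

/-!
Any two distinct acceptable pairs with a common man or a common woman are adjacent in `Γ` (the
preorders are total), so all vertices of `Γ*(μ, μ')` at a given person lie in one weak component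
(`comp_of_share`). Matchings contained in `V(Γ*(μ, μ'))` that agree on a component therefore assign
the same partner to each person met by that component (`agree_partner`). Isolated vertices belong
to `μ` and `μ'`, because both ends would otherwise be single (`isolated_mem`). Hence `μ₁` and `μ₂`
agree with `μ` or `μ'` on every component, trivial ones included.

Stability (`stable_of_agree`). If `(m, w)` blocks such a matching `ν`, then `ν(m)` is `μ(m)` or
`μ'(m)` and `ν(w)` is `μ(w)` or `μ'(w)`. If both come from the same matching, the pair blocks that
matching. Otherwise the stability of `μ` and `μ'` places `(m, w)` in `V(Γ*(μ, μ'))`; then `m` and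
`w` meet the same component, and both partners do come from the same matching.

Uniqueness. For a person met by `C` the partners in `μ₁, μ₂` are those in `μ, μ'`; for every other
person `μ₁` and `μ₂` give the same partner. So `V(Γ*(μ₁, μ₂))` consists of `C` together with pairs
in `μ₁ ∩ μ₂` that share no person with `C` or with one another, and `C` is the only nontrivial
component. No finiteness is needed.
-/

open scoped Classical

/-- An instance of the stable marriage problem with ties: men `M`, women `W`,
acceptable pairs `Acc`, and for each man (resp. woman) a total preorder on the
acceptable partners. `mle m w w'` means `w ≤_m w'`, `wle w m m'` means `m ≤_w m'`. -/
structure SMTI (M W : Type*) where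
  Acc : Set (M × W)
  mle : M → W → W → Prop
  wle : W → M → M → Prop
  mle_refl : ∀ m w, (m, w) ∈ Acc → mle m w w
  mle_trans : ∀ m w₁ w₂ w₃, mle m w₁ w₂ → mle m w₂ w₃ → mle m w₁ w₃
  mle_total : ∀ m w w', (m, w) ∈ Acc → (m, w') ∈ Acc → mle m w w' ∨ mle m w' w
  mle_mem : ∀ m w w', mle m w w' → (m, w) ∈ Acc ∧ (m, w') ∈ Acc
  wle_refl : ∀ w m, (m, w) ∈ Acc → wle w m m
  wle_trans : ∀ w m₁ m₂ m₃, wle w m₁ m₂ → wle w m₂ m₃ → wle w m₁ m₃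
  wle_total : ∀ w m m', (m, w) ∈ Acc → (m', w) ∈ Acc → wle w m m' ∨ wle w m' m
  wle_mem : ∀ w m m', wle w m m' → (m, w) ∈ Acc ∧ (m', w) ∈ Acc

namespace SMTI

variable {M W : Type*} (I : SMTI M W)

/-- `≤_m` extended to `Option W`, where `none` (being single) is strictly below
every acceptable partner. -/
def mleO (m : M) : Option W → Option W → Prop
  | none, none => True
  | none, some w => (m, w) ∈ I.Acc
  | some _, none => False
  | some w, some w' => I.mle m w w'

/-- `≤_w` extended to `Option M`. -/
def wleO (w : W) : Option M → Option M → Prop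
  | none, none => True
  | none, some m => (m, w) ∈ I.Acc
  | some _, none => False
  | some m, some m' => I.wle w m m'

/-- strict version of `mleO` -/
def mltO (m : M) (a b : Option W) : Prop := I.mleO m a b ∧ ¬ I.mleO m b a

/-- strict version of `wleO` -/
def wltO (w : W) (a b : Option M) : Prop := I.wleO w a b ∧ ¬ I.wleO w b a

/-- A matching: a set of acceptable pairs in which every man and every woman
occurs at most once. -/
def IsMatching (μ : Set (M × W)) : Prop :=
  μ ⊆ I.Acc ∧ (∀ m w w', (m, w) ∈ μ → (m, w') ∈ μ → w = w') ∧
    (∀ m m' w, (m, w) ∈ μ → (m', w) ∈ μ → m = m')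

/-- the partner `μ(m)` of a man `m` (`none` if `m` is single) -/
noncomputable def mpartner (μ : Set (M × W)) (m : M) : Option W :=
  if h : ∃ w, (m, w) ∈ μ then some h.choose else none

/-- the partner `μ(w)` of a woman `w` (`none` if `w` is single) -/
noncomputable def wpartner (μ : Set (M × W)) (w : W) : Option M :=
  if h : ∃ m, (m, w) ∈ μ then some h.choose else none

/-- A stable matching: no acceptable pair is blocking. -/
def IsStable (μ : Set (M × W)) : Prop :=
  I.IsMatching μ ∧ ∀ p ∈ I.Acc,
    I.mleO p.1 (some p.2) (mpartner μ p.1) ∨ I.wleO p.2 (some p.1) (wpartner μ p.2)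

/-- `between_m(a, b, c)` -/
def betweenM (m : M) (a b c : Option W) : Prop :=
  a = b ∨ a = c ∨ (I.mltO m b a ∧ I.mleO m a c) ∨ (I.mltO m c a ∧ I.mleO m a b)

/-- `between_w(a, b, c)` -/
def betweenW (w : W) (a b c : Option M) : Prop :=
  a = b ∨ a = c ∨ (I.wltO w b a ∧ I.wleO w a c) ∨ (I.wltO w c a ∧ I.wleO w a b)

/-- the (directed) edge relation of the marriage graph `Γ` -/
def gammaEdge (p q : M × W) : Prop :=
  p ∈ I.Acc ∧ q ∈ I.Acc ∧
    ((p.1 = q.1 ∧ p.2 ≠ q.2 ∧ I.mle p.1 p.2 q.2) ∨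
      (p.2 = q.2 ∧ p.1 ≠ q.1 ∧ I.wle p.2 p.1 q.1))

/-- the vertex set of `Γ*(μ, μ')` -/
noncomputable def starV (μ μ' : Set (M × W)) : Set (M × W) :=
  {p | p ∈ I.Acc ∧
    I.betweenM p.1 (some p.2) (mpartner μ p.1) (mpartner μ' p.1) ∧
    I.betweenW p.2 (some p.1) (wpartner μ p.2) (wpartner μ' p.2)}

/-- undirected adjacency inside the subgraph of `Γ` induced by the vertex set `S` -/
def adjIn (S : Set (M × W)) (p q : M × W) : Prop :=
  p ∈ S ∧ q ∈ S ∧ (I.gammaEdge p q ∨ I.gammaEdge q p)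

/-- `p` and `q` lie in the same weakly connected component of the subgraph of `Γ`
induced by `S` -/
def connIn (S : Set (M × W)) (p q : M × W) : Prop :=
  p ∈ S ∧ q ∈ S ∧ Relation.ReflTransGen (I.adjIn S) p q

/-- `p` is an isolated vertex of the subgraph of `Γ` induced by `S` -/
def IsIsolated (S : Set (M × W)) (p : M × W) : Prop :=
  p ∈ S ∧ ∀ q, ¬ I.adjIn S p q

/-- `C` is a nontrivial weakly connected component of the subgraph of `Γ`
induced by `S` -/
def IsNontrivialComp (S : Set (M × W)) (C : Set (M × W)) : Prop :=
  (∃ v ∈ S, C = {u | I.connIn S v u}) ∧ ¬ C.Subsingleton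

/-- `B` is the vertex set of a principal block (`P^m` or `P^w`) of the subgraph
of `Γ` induced by `S` -/
def IsPrincipalBlock (S : Set (M × W)) (B : Set (M × W)) : Prop :=
  (∃ m : M, B = {p ∈ S | p.1 = m}) ∨ (∃ w : W, B = {p ∈ S | p.2 = w})

/-- characteristic vector `x_ν ∈ ℝ^A` of a set of pairs -/
noncomputable def chi (ν : Set (M × W)) : M × W → ℝ := fun p => if p ∈ ν then 1 else 0

/-- standard basis vector `e_v` -/
noncomputable def eVec (v : M × W) : M × W → ℝ := fun p => if p = v then 1 else 0

/-- dot product on `ℝ^{M × W}` -/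
noncomputable def dotP [Fintype M] [Fintype W] (α x : M × W → ℝ) : ℝ := ∑ p, α p * x p

/-- `E`: the span of all vectors `α` (supported on the acceptable pairs) for which
there is `β` so that `α · x ≥ β` is valid for all stable matchings and tight at
both `μ` and `μ'`. -/
noncomputable def Espace [Fintype M] [Fintype W] (μ μ' : Set (M × W)) :
    Submodule ℝ (M × W → ℝ) :=
  Submodule.span ℝ {α | (∀ p, p ∉ I.Acc → α p = 0) ∧ ∃ β : ℝ,
    (∀ ν, I.IsStable ν → β ≤ dotP α (chi ν)) ∧
    dotP α (chi μ) = β ∧ dotP α (chi μ') = β}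

/-- `a` is linked to `b`: `E` contains `λ e_a + γ e_b` with `λ ≠ 0`. -/
def linked [Fintype M] [Fintype W] (μ μ' : Set (M × W)) (a b : M × W) : Prop :=
  ∃ l g : ℝ, l ≠ 0 ∧ l • eVec a + g • eVec b ∈ I.Espace μ μ'

/-- `x_μ` and `x_μ'` are adjacent extreme points of `P_SMT`: they are distinct, and
whenever their midpoint is a convex combination of extreme points (characteristic
vectors of stable matchings), only `x_μ` and `x_μ'` get nonzero weight. -/
def AdjacentSM [Fintype M] [Fintype W] (μ μ' : Set (M × W)) : Prop :=
  chi μ ≠ chi μ' ∧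
  ∀ (T : Finset (Set (M × W))) (c : Set (M × W) → ℝ),
    (∀ ν ∈ T, I.IsStable ν) → (∀ ν ∈ T, 0 ≤ c ν) → (∑ ν ∈ T, c ν) = 1 →
    (∑ ν ∈ T, c ν • chi ν) = (2⁻¹ : ℝ) • (chi μ + chi μ') →
    ∀ ν ∈ T, c ν ≠ 0 → chi ν = chi μ ∨ chi ν = chi μ'

end SMTI

namespace SMTI

variable {M W : Type*} {I : SMTI M W}

/-! ### Partners and the extended preorders -/

lemma mpartner_eq {μ : Set (M × W)} (h : I.IsMatching μ) {m : M} {w : W} :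
    mpartner μ m = some w ↔ (m, w) ∈ μ := by
  unfold mpartner
  split_ifs with hx
  · constructor
    · intro e
      have := hx.choose_spec
      rw [Option.some.inj e] at this
      exact this
    · intro hw
      rw [h.2.1 m _ _ hx.choose_spec hw]
  · constructor
    · intro e; cases e
    · intro hw; exact absurd ⟨w, hw⟩ hx

lemma wpartner_eq {μ : Set (M × W)} (h : I.IsMatching μ) {m : M} {w : W} :
    wpartner μ w = some m ↔ (m, w) ∈ μ := by
  unfold wpartner
  split_ifs with hx
  · constructor
    · intro e
      have := hx.choose_spec
      rw [Option.some.inj e] at this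
      exact this
    · intro hw
      rw [h.2.2 _ _ w hx.choose_spec hw]
  · constructor
    · intro e; cases e
    · intro hw; exact absurd ⟨m, hw⟩ hx

lemma mpartner_congr {μ ν : Set (M × W)} (hμ : I.IsMatching μ) (hν : I.IsMatching ν) {m : M}
    (h : ∀ w, (m, w) ∈ μ ↔ (m, w) ∈ ν) : mpartner μ m = mpartner ν m := by
  apply Option.ext
  intro w
  rw [mpartner_eq hμ, mpartner_eq hν, h]

lemma wpartner_congr {μ ν : Set (M × W)} (hμ : I.IsMatching μ) (hν : I.IsMatching ν) {w : W}
    (h : ∀ m, (m, w) ∈ μ ↔ (m, w) ∈ ν) : wpartner μ w = wpartner ν w := by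
  apply Option.ext
  intro m
  rw [wpartner_eq hμ, wpartner_eq hν, h]

lemma mlt_of_not_le {μ : Set (M × W)} (hμ : I.IsMatching μ) {p : M × W} (hp : p ∈ I.Acc)
    (h : ¬ I.mleO p.1 (some p.2) (mpartner μ p.1)) :
    I.mltO p.1 (mpartner μ p.1) (some p.2) := by
  refine ⟨?_, h⟩
  rcases hx : mpartner μ p.1 with _ | w
  · exact hp
  · rw [hx] at h
    exact (I.mle_total p.1 p.2 w hp (hμ.1 ((mpartner_eq hμ).1 hx))).resolve_left h

lemma wlt_of_not_le {μ : Set (M × W)} (hμ : I.IsMatching μ) {p : M × W} (hp : p ∈ I.Acc)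
    (h : ¬ I.wleO p.2 (some p.1) (wpartner μ p.2)) :
    I.wltO p.2 (wpartner μ p.2) (some p.1) := by
  refine ⟨?_, h⟩
  rcases hx : wpartner μ p.2 with _ | m
  · exact hp
  · rw [hx] at h
    exact (I.wle_total p.2 p.1 m hp (hμ.1 ((wpartner_eq hμ).1 hx))).resolve_left h

lemma betweenM_self {m : M} {a b : Option W} (h : I.betweenM m a b b) : a = b := by
  rcases h with h | h | ⟨h, h'⟩ | ⟨h, h'⟩
  · exact h
  · exact h
  · exact absurd h' h.2
  · exact absurd h' h.2

lemma betweenW_self {w : W} {a b : Option M} (h : I.betweenW w a b b) : a = b := by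
  rcases h with h | h | ⟨h, h'⟩ | ⟨h, h'⟩
  · exact h
  · exact h
  · exact absurd h' h.2
  · exact absurd h' h.2

lemma subset_starV_left {μ μ' : Set (M × W)} (hμ : I.IsMatching μ) : μ ⊆ I.starV μ μ' :=
  fun _ hp => ⟨hμ.1 hp, Or.inl ((mpartner_eq hμ).2 hp).symm, Or.inl ((wpartner_eq hμ).2 hp).symm⟩

lemma subset_starV_right {μ μ' : Set (M × W)} (hμ' : I.IsMatching μ') : μ' ⊆ I.starV μ μ' :=
  fun _ hp => ⟨hμ'.1 hp, Or.inr (Or.inl ((mpartner_eq hμ').2 hp).symm),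
    Or.inr (Or.inl ((wpartner_eq hμ').2 hp).symm)⟩

lemma starV_subset_acc {μ μ' : Set (M × W)} : I.starV μ μ' ⊆ I.Acc := fun _ hp => hp.1

/-! ### Weakly connected components -/

/-- Two vertices share a person: the same man or the same woman. -/
def share (p q : M × W) : Prop := p.1 = q.1 ∨ p.2 = q.2

variable (I) in
/-- The vertex set of the weak component of `v` in the subgraph of `Γ` induced by `S`. -/
def comp (S : Set (M × W)) (v : M × W) : Set (M × W) := {u | I.connIn S v u}

lemma adjIn_symm {S : Set (M × W)} {p q : M × W} (h : I.adjIn S p q) : I.adjIn S q p :=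
  ⟨h.2.1, h.1, h.2.2.symm⟩

lemma adjIn_ne {S : Set (M × W)} {p q : M × W} (h : I.adjIn S p q) : p ≠ q := by
  rintro rfl
  rcases h.2.2 with ⟨_, _, h | h⟩ | ⟨_, _, h | h⟩ <;> exact h.2.1 rfl

lemma adjIn_share {S : Set (M × W)} {p q : M × W} (h : I.adjIn S p q) : share p q := by
  rcases h.2.2 with ⟨_, _, h | h⟩ | ⟨_, _, h | h⟩
  · exact Or.inl h.1
  · exact Or.inr h.1
  · exact Or.inl h.1.symm
  · exact Or.inr h.1.symm

/-- Totality of the preorders makes distinct vertices at a common person adjacent. -/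
lemma adjIn_of_share {S : Set (M × W)} (hS : S ⊆ I.Acc) {p q : M × W} (hp : p ∈ S) (hq : q ∈ S)
    (hne : p ≠ q) (h : share p q) : I.adjIn S p q := by
  obtain ⟨m, w⟩ := p
  obtain ⟨m', w'⟩ := q
  refine ⟨hp, hq, ?_⟩
  rcases h with h | h
  · obtain rfl : m = m' := h
    have hw : w ≠ w' := fun e => hne (by rw [e])
    rcases I.mle_total m w w' (hS hp) (hS hq) with h | h
    · exact Or.inl ⟨hS hp, hS hq, Or.inl ⟨rfl, hw, h⟩⟩
    · exact Or.inr ⟨hS hq, hS hp, Or.inl ⟨rfl, hw.symm, h⟩⟩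
  · obtain rfl : w = w' := h
    have hm : m ≠ m' := fun e => hne (by rw [e])
    rcases I.wle_total w m m' (hS hp) (hS hq) with h | h
    · exact Or.inl ⟨hS hp, hS hq, Or.inr ⟨rfl, hm, h⟩⟩
    · exact Or.inr ⟨hS hq, hS hp, Or.inr ⟨rfl, hm.symm, h⟩⟩

lemma connIn_symm {S : Set (M × W)} {p q : M × W} (h : I.connIn S p q) : I.connIn S q p :=
  have : Std.Symm (I.adjIn S) := ⟨fun _ _ => adjIn_symm⟩
  ⟨h.2.1, h.1, Std.Symm.symm _ _ h.2.2⟩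

lemma connIn_trans {S : Set (M × W)} {p q r : M × W} (h : I.connIn S p q) (h' : I.connIn S q r) :
    I.connIn S p r :=
  ⟨h.1, h'.2.1, h.2.2.trans h'.2.2⟩

lemma mem_comp_self {S : Set (M × W)} {v : M × W} (hv : v ∈ S) : v ∈ I.comp S v :=
  ⟨hv, hv, .refl⟩

lemma comp_eq {S : Set (M × W)} {v u : M × W} (h : u ∈ I.comp S v) : I.comp S u = I.comp S v := by
  ext x
  exact ⟨fun hx => connIn_trans h hx, fun hx => connIn_trans (connIn_symm h) hx⟩

lemma comp_of_adj {S : Set (M × W)} {v u x : M × W} (hu : u ∈ I.comp S v) (h : I.adjIn S u x) :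
    x ∈ I.comp S v :=
  ⟨hu.1, h.2.1, hu.2.2.tail h⟩

/-- A component containing one vertex at a person contains every vertex at that person. -/
lemma comp_of_share {S : Set (M × W)} (hS : S ⊆ I.Acc) {v u x : M × W} (hu : u ∈ I.comp S v)
    (hx : x ∈ S) (h : share u x) : x ∈ I.comp S v := by
  by_cases hne : u = x
  · exact hne ▸ hu
  · exact comp_of_adj hu (adjIn_of_share hS hu.2.1 hx hne h)

lemma isolated_of_subsingleton {S : Set (M × W)} {v : M × W} (hv : v ∈ S)
    (h : (I.comp S v).Subsingleton) : I.IsIsolated S v :=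
  ⟨hv, fun _ ha => adjIn_ne ha (h (mem_comp_self hv) (comp_of_adj (mem_comp_self hv) ha))⟩

lemma comp_subset_of_isolated {S : Set (M × W)} {v : M × W} (h : I.IsIsolated S v) :
    I.comp S v ⊆ {v} := by
  intro u hu
  rcases Relation.ReflTransGen.cases_head hu.2.2 with e | ⟨c, hc, _⟩
  · exact e.symm
  · exact absurd hc (h.2 c)

/-- An isolated vertex lies in every stable matching contained in the vertex set: otherwise both
its ends are single, and it is a blocking pair. -/
lemma isolated_mem {S μ : Set (M × W)} (hS : S ⊆ I.Acc) (hμ : I.IsStable μ) (hμS : μ ⊆ S)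
    {v : M × W} (hv : I.IsIsolated S v) : v ∈ μ := by
  by_contra hn
  have key : ∀ u ∈ μ, ¬ share v u := fun u hu hs =>
    hv.2 u (adjIn_of_share hS hv.1 (hμS hu) (fun e => hn (e ▸ hu)) hs)
  have h1 : mpartner μ v.1 = none := by
    by_contra hx
    obtain ⟨w, hw⟩ := Option.ne_none_iff_exists'.1 hx
    exact key _ ((mpartner_eq hμ.1).1 hw) (Or.inl rfl)
  have h2 : wpartner μ v.2 = none := by
    by_contra hx
    obtain ⟨m, hm⟩ := Option.ne_none_iff_exists'.1 hx
    exact key _ ((wpartner_eq hμ.1).1 hm) (Or.inr rfl)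
  have := hμ.2 v (hS hv.1)
  rw [h1, h2] at this
  exact this.elim id id

/-! ### Matchings that agree on components -/

lemma agree_mpartner {S ν σ : Set (M × W)} (hS : S ⊆ I.Acc) (hν : I.IsMatching ν)
    (hσ : I.IsMatching σ) (hνS : ν ⊆ S) (hσS : σ ⊆ S) {v u : M × W} (hu : u ∈ I.comp S v)
    (h : ν ∩ I.comp S v = σ ∩ I.comp S v) : mpartner ν u.1 = mpartner σ u.1 := by
  apply mpartner_congr hν hσ
  refine fun w => ⟨fun hw => ?_, fun hw => ?_⟩
  · exact (h.subset ⟨hw, comp_of_share hS hu (hνS hw) (Or.inl rfl)⟩).1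
  · exact (h.superset ⟨hw, comp_of_share hS hu (hσS hw) (Or.inl rfl)⟩).1

lemma agree_wpartner {S ν σ : Set (M × W)} (hS : S ⊆ I.Acc) (hν : I.IsMatching ν)
    (hσ : I.IsMatching σ) (hνS : ν ⊆ S) (hσS : σ ⊆ S) {v u : M × W} (hu : u ∈ I.comp S v)
    (h : ν ∩ I.comp S v = σ ∩ I.comp S v) : wpartner ν u.2 = wpartner σ u.2 := by
  apply wpartner_congr hν hσ
  refine fun m => ⟨fun hw => ?_, fun hw => ?_⟩
  · exact (h.subset ⟨hw, comp_of_share hS hu (hνS hw) (Or.inr rfl)⟩).1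
  · exact (h.superset ⟨hw, comp_of_share hS hu (hσS hw) (Or.inr rfl)⟩).1

lemma agree_partner {S ν σ : Set (M × W)} (hS : S ⊆ I.Acc) (hν : I.IsMatching ν)
    (hσ : I.IsMatching σ) (hνS : ν ⊆ S) (hσS : σ ⊆ S) {v u : M × W} (hu : u ∈ I.comp S v)
    (h : ν ∩ I.comp S v = σ ∩ I.comp S v) :
    mpartner ν u.1 = mpartner σ u.1 ∧ wpartner ν u.2 = wpartner σ u.2 :=
  ⟨agree_mpartner hS hν hσ hνS hσS hu h, agree_wpartner hS hν hσ hνS hσS hu h⟩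

/-- A matching that contains the isolated vertices and agrees with `μ` or `μ'` on the nontrivial
components does so on all components. -/
lemma agree_all {μ μ' ν : Set (M × W)} (hμ : I.IsStable μ)
    (hiso : ∀ v, I.IsIsolated (I.starV μ μ') v → v ∈ ν)
    (hagree : ∀ C, I.IsNontrivialComp (I.starV μ μ') C → ν ∩ C = μ ∩ C ∨ ν ∩ C = μ' ∩ C)
    {v : M × W} (hv : v ∈ I.starV μ μ') :
    ν ∩ I.comp (I.starV μ μ') v = μ ∩ I.comp (I.starV μ μ') v ∨
      ν ∩ I.comp (I.starV μ μ') v = μ' ∩ I.comp (I.starV μ μ') v := by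
  by_cases hs : (I.comp (I.starV μ μ') v).Subsingleton
  · have hi := isolated_of_subsingleton hv hs
    have h1 := hiso v hi
    have h2 := isolated_mem starV_subset_acc hμ (subset_starV_left hμ.1) hi
    left
    ext x
    constructor
    · rintro ⟨_, hx⟩
      obtain rfl : x = v := comp_subset_of_isolated hi hx
      exact ⟨h2, hx⟩
    · rintro ⟨_, hx⟩
      obtain rfl : x = v := comp_subset_of_isolated hi hx
      exact ⟨h1, hx⟩
  · exact hagree _ ⟨⟨v, hv, rfl⟩, hs⟩

/-- A pair that beats the `μ`-partner of its man and the `μ'`-partner of its woman is a vertex of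
`Γ*(μ, μ')`. -/
lemma mem_starV_of_cross {μ μ' : Set (M × W)} (hμ : I.IsStable μ) (hμ' : I.IsStable μ')
    {p : M × W} (hp : p ∈ I.Acc) (h1 : ¬ I.mleO p.1 (some p.2) (mpartner μ p.1))
    (h2 : ¬ I.wleO p.2 (some p.1) (wpartner μ' p.2)) : p ∈ I.starV μ μ' :=
  ⟨hp, Or.inr (Or.inr (Or.inl ⟨mlt_of_not_le hμ.1 hp h1, (hμ'.2 p hp).resolve_right h2⟩)),
    Or.inr (Or.inr (Or.inr ⟨wlt_of_not_le hμ'.1 hp h2, (hμ.2 p hp).resolve_left h1⟩))⟩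

lemma starV_comm {μ μ' : Set (M × W)} : I.starV μ μ' = I.starV μ' μ := by
  ext p
  simp only [starV, betweenM, betweenW, Set.mem_ofPred_eq]
  tauto

lemma stable_of_agree {μ μ' ν : Set (M × W)} (hμ : I.IsStable μ) (hμ' : I.IsStable μ')
    (hν : I.IsMatching ν) (hsub : ν ⊆ I.starV μ μ')
    (hagree : ∀ v ∈ I.starV μ μ',
      ν ∩ I.comp (I.starV μ μ') v = μ ∩ I.comp (I.starV μ μ') v ∨
        ν ∩ I.comp (I.starV μ μ') v = μ' ∩ I.comp (I.starV μ μ') v) :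
    I.IsStable ν := by
  have hL := subset_starV_left (μ' := μ') hμ.1
  have hR := subset_starV_right (μ := μ) hμ'.1
  have hpart : ∀ u ∈ I.starV μ μ',
      (mpartner ν u.1 = mpartner μ u.1 ∧ wpartner ν u.2 = wpartner μ u.2) ∨
      (mpartner ν u.1 = mpartner μ' u.1 ∧ wpartner ν u.2 = wpartner μ' u.2) := fun u hu =>
    (hagree u hu).imp
      (agree_partner starV_subset_acc hν hμ.1 hsub hL (mem_comp_self hu))
      (agree_partner starV_subset_acc hν hμ'.1 hsub hR (mem_comp_self hu))
  have hman : ∀ m, mpartner ν m = mpartner μ m ∨ mpartner ν m = mpartner μ' m := by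
    intro m
    by_cases ht : ∃ w, (m, w) ∈ I.starV μ μ'
    · obtain ⟨w, hw⟩ := ht
      exact (hpart _ hw).imp And.left And.left
    · exact Or.inl (mpartner_congr hν hμ.1 fun w =>
        ⟨fun h => absurd ⟨w, hsub h⟩ ht, fun h => absurd ⟨w, hL h⟩ ht⟩)
  have hwoman : ∀ w, wpartner ν w = wpartner μ w ∨ wpartner ν w = wpartner μ' w := by
    intro w
    by_cases ht : ∃ m, (m, w) ∈ I.starV μ μ'
    · obtain ⟨m, hm⟩ := ht
      exact (hpart _ hm).imp And.right And.right
    · exact Or.inl (wpartner_congr hν hμ.1 fun m =>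
        ⟨fun h => absurd ⟨m, hsub h⟩ ht, fun h => absurd ⟨m, hL h⟩ ht⟩)
  refine ⟨hν, fun p hp => ?_⟩
  by_contra hcon
  obtain ⟨h1, h2⟩ := not_or.1 hcon
  have hnot : p ∉ I.starV μ μ' := by
    intro hpS
    rcases hpart p hpS with ⟨e1, e2⟩ | ⟨e1, e2⟩ <;> rw [e1] at h1 <;> rw [e2] at h2
    · exact (hμ.2 p hp).elim h1 h2
    · exact (hμ'.2 p hp).elim h1 h2
  rcases hman p.1 with e1 | e1 <;> rcases hwoman p.2 with e2 | e2 <;> rw [e1] at h1 <;>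
    rw [e2] at h2
  · exact (hμ.2 p hp).elim h1 h2
  · exact hnot (mem_starV_of_cross hμ hμ' hp h1 h2)
  · exact hnot (starV_comm ▸ mem_starV_of_cross hμ' hμ hp h1 h2)
  · exact (hμ'.2 p hp).elim h1 h2

end SMTI

/-! ### The nontrivial component of `Γ*(μ₁, μ₂)` -/

open SMTI in

theorem stmt14 {M W : Type*} (I : SMTI M W) (μ μ' μ₁ μ₂ : Set (M × W))
    (hμ : I.IsStable μ) (hμ' : I.IsStable μ')
    (h1m : I.IsMatching μ₁) (h2m : I.IsMatching μ₂)
    (h1sub : μ₁ ⊆ I.starV μ μ') (h2sub : μ₂ ⊆ I.starV μ μ')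
    (h1iso : ∀ v, I.IsIsolated (I.starV μ μ') v → v ∈ μ₁)
    (h2iso : ∀ v, I.IsIsolated (I.starV μ μ') v → v ∈ μ₂)
    (h1agree : ∀ C, I.IsNontrivialComp (I.starV μ μ') C →
      μ₁ ∩ C = μ ∩ C ∨ μ₁ ∩ C = μ' ∩ C)
    (h2agree : ∀ C, I.IsNontrivialComp (I.starV μ μ') C →
      μ₂ ∩ C = μ ∩ C ∨ μ₂ ∩ C = μ' ∩ C)
    (C : Set (M × W)) (hC : I.IsNontrivialComp (I.starV μ μ') C)
    (h1C : μ₁ ∩ C = μ ∩ C) (h2C : μ₂ ∩ C = μ' ∩ C)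
    (hdisagree : μ₁ ∩ C ≠ μ₂ ∩ C)
    (hother : ∀ C', I.IsNontrivialComp (I.starV μ μ') C' → C' ≠ C →
      μ₁ ∩ C' = μ₂ ∩ C') :
    I.IsStable μ₁ ∧ I.IsStable μ₂ ∧
      ∃! D, I.IsNontrivialComp (I.starV μ₁ μ₂) D := by
  have hS : I.starV μ μ' ⊆ I.Acc := starV_subset_acc
  refine ⟨stable_of_agree hμ hμ' h1m h1sub fun v hv => agree_all hμ h1iso h1agree hv,
    stable_of_agree hμ hμ' h2m h2sub fun v hv => agree_all hμ h2iso h2agree hv, ?_⟩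
  obtain ⟨⟨v, hv, hCv⟩, hCn⟩ := hC
  change C = I.comp _ v at hCv
  have hL := subset_starV_left (μ' := μ') hμ.1
  have hR := subset_starV_right (μ := μ) hμ'.1
  have hCS : C ⊆ I.starV μ μ' := by
    rw [hCv]; exact fun u hu => hu.2.1
  have hshare : ∀ u ∈ C, ∀ x ∈ I.starV μ μ', share u x → x ∈ C := by
    rw [hCv]; exact fun u hu x hx h => comp_of_share hS hu hx h
  have hP1 : ∀ u ∈ C, mpartner μ₁ u.1 = mpartner μ u.1 ∧ wpartner μ₁ u.2 = wpartner μ u.2 := by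
    rw [hCv] at h1C ⊢
    exact fun u hu => agree_partner hS h1m hμ.1 h1sub hL hu h1C
  have hP2 : ∀ u ∈ C, mpartner μ₂ u.1 = mpartner μ' u.1 ∧ wpartner μ₂ u.2 = wpartner μ' u.2 := by
    rw [hCv] at h2C ⊢
    exact fun u hu => agree_partner hS h2m hμ'.1 h2sub hR hu h2C
  have hout : ∀ u ∈ I.starV μ μ', u ∉ C → (u ∈ μ₁ ↔ u ∈ μ₂) := by
    intro u hu huC
    by_cases hs : (I.comp (I.starV μ μ') u).Subsingleton
    · have hi := isolated_of_subsingleton hu hs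
      exact iff_of_true (h1iso u hi) (h2iso u hi)
    · have e := hother (I.comp (I.starV μ μ') u) ⟨⟨u, hu, rfl⟩, hs⟩
        (fun e => huC (e ▸ mem_comp_self hu))
      exact ⟨fun h => (e.subset ⟨h, mem_comp_self hu⟩).1,
        fun h => (e.superset ⟨h, mem_comp_self hu⟩).1⟩
  have hmout : ∀ m, (∀ w, (m, w) ∉ C) → mpartner μ₁ m = mpartner μ₂ m := fun m hm =>
    mpartner_congr h1m h2m fun w => ⟨fun h => (hout _ (h1sub h) (hm w)).1 h,
      fun h => (hout _ (h2sub h) (hm w)).2 h⟩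
  have hwout : ∀ w, (∀ m, (m, w) ∉ C) → wpartner μ₁ w = wpartner μ₂ w := fun w hw =>
    wpartner_congr h1m h2m fun m => ⟨fun h => (hout _ (h1sub h) (hw m)).1 h,
      fun h => (hout _ (h2sub h) (hw m)).2 h⟩
  have hCS' : C ⊆ I.starV μ₁ μ₂ := by
    intro p hp
    have h := hCS hp
    refine ⟨h.1, ?_, ?_⟩
    · rw [(hP1 p hp).1, (hP2 p hp).1]; exact h.2.1
    · rw [(hP1 p hp).2, (hP2 p hp).2]; exact h.2.2
  have hrest : ∀ p ∈ I.starV μ₁ μ₂, p ∉ C → p ∈ μ₁ := by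
    rintro ⟨m, w⟩ hp hpC
    by_cases hm : ∃ w', (m, w') ∈ C
    · by_cases hw : ∃ m', (m', w) ∈ C
      · obtain ⟨w', hw'⟩ := hm
        obtain ⟨m', hm'⟩ := hw
        -- Both ends meet `C`, so the betweenness conditions for `μ₁, μ₂` are those for `μ, μ'`.
        refine absurd (hshare _ hw' (m, w) ⟨hp.1, ?_, ?_⟩ (Or.inl rfl)) hpC
        · have := hp.2.1
          rw [(hP1 _ hw').1, (hP2 _ hw').1] at this
          exact this
        · have := hp.2.2
          rw [(hP1 _ hm').2, (hP2 _ hm').2] at this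
          exact this
      · have := hp.2.2
        rw [← hwout w (not_exists.1 hw)] at this
        exact (wpartner_eq h1m).1 (betweenW_self this).symm
    · have := hp.2.1
      rw [← hmout m (not_exists.1 hm)] at this
      exact (mpartner_eq h1m).1 (betweenM_self this).symm
  have hiso : ∀ p ∈ I.starV μ₁ μ₂, p ∉ C → I.IsIsolated (I.starV μ₁ μ₂) p := by
    intro p hp hpC
    refine ⟨hp, fun q ha => ?_⟩
    have hp1 := hrest p hp hpC
    have hs := adjIn_share ha
    by_cases hq : q ∈ C
    · exact hpC (hshare q hq p (h1sub hp1) (hs.imp Eq.symm Eq.symm))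
    · have hq1 := hrest q ha.2.1 hq
      apply adjIn_ne ha
      obtain ⟨m, w⟩ := p
      obtain ⟨m', w'⟩ := q
      rcases hs with h | h
      · obtain rfl : m = m' := h
        rw [h1m.2.1 m w w' hp1 hq1]
      · obtain rfl : w = w' := h
        rw [h1m.2.2 m m' w hp1 hq1]
  have hvC : v ∈ C := hCv ▸ mem_comp_self hv
  have hcomp : C = I.comp (I.starV μ₁ μ₂) v := by
    ext u
    constructor
    · intro hu
      refine ⟨hCS' hvC, hCS' hu, ?_⟩
      have hpath : Relation.ReflTransGen (I.adjIn (I.starV μ μ')) v u := (hCv.subset hu).2.2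
      clear hu
      -- Every vertex of a path in `Γ*(μ, μ')` starting at `v` lies in `C`.
      have : u ∈ C ∧ Relation.ReflTransGen (I.adjIn (I.starV μ₁ μ₂)) v u := by
        induction hpath with
        | refl => exact ⟨hvC, .refl⟩
        | tail _ ha ih =>
          have hc := hshare _ ih.1 _ ha.2.1 (adjIn_share ha)
          exact ⟨hc, ih.2.tail ⟨hCS' ih.1, hCS' hc, ha.2.2⟩⟩
      exact this.2
    · rintro ⟨_, _, hpath⟩
      induction hpath with
      | refl => exact hvC
      | tail _ ha ih =>
        by_contra hc
        exact (hiso _ ha.2.1 hc).2 _ (adjIn_symm ha)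
  refine ⟨C, ⟨⟨v, hCS' hvC, hcomp⟩, hCn⟩, ?_⟩
  rintro D ⟨⟨d, hd, hDd⟩, hDn⟩
  change D = I.comp _ d at hDd
  by_cases hdC : d ∈ C
  · rw [hDd, hcomp]
    exact comp_eq (hcomp ▸ hdC)
  · exact absurd (hDd ▸ Set.subsingleton_singleton.anti
      (comp_subset_of_isolated (hiso d hd hdC))) hDn
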